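/- arXiv:2601.12888 — 2 statements merged into one kernel-verified Lean document; each statement's English description precedes it below -/
import Mathlib

section
/- Let α, β, γ ∈ ℂ with none of α, β, γ a nonpositive integer, let δ, w ∈ ℂ, and let k ∈ (0,1). Define f_{m,n} as in the context, with the conventions f_{−1,ℓ} := 0 and f_{m,n} := 0 for m > n. Then for every n ≥ 1 and every m with 0 ≤ m ≤ n: f_{m,n}/k² − f_{m,n−1} = −( (n−1)!·(γ)_{n−1} / (k²·(α)_n·(β)_n) ) · Σ_{ℓ=m−1}^{n−1} ( (α)_ℓ·(β)_ℓ / (ℓ!·(γ)_ℓ) ) · (w − (1−k²)δ·ℓ) · f_{m−1,ℓ}, where for m = 0 the sum is interpreted with f_{−1,ℓ} = 0 (so both sides vanish). -/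
/-- The Pochhammer symbol `(x)_n = x(x+1)⋯(x+n-1)`. -/
noncomputable def poch (x : ℂ) (n : ℕ) : ℂ := ∏ i ∈ Finset.range n, (x + (i : ℂ))

/-- The index set of tuples `(ℓ_1, j_1, …, ℓ_m, j_m)` with
`0 ≤ ℓ_1 ≤ j_1 < ℓ_2 ≤ j_2 < ⋯ < ℓ_m ≤ j_m < n`, encoded as pairs of functions
`(ℓ, j) : (Fin m → Fin n) × (Fin m → Fin n)`. -/
def heunIdx (m n : ℕ) : Finset ((Fin m → Fin n) × (Fin m → Fin n)) :=
  Finset.univ.filter fun p =>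
    (∀ s : Fin m, (p.1 s : ℕ) ≤ (p.2 s : ℕ)) ∧
    (∀ s t : Fin m, (s : ℕ) + 1 = (t : ℕ) → (p.2 s : ℕ) < (p.1 t : ℕ))

/-- The coefficients `f_{m,n}`: `f_{0,n} = k^{2n}`; for `1 ≤ m ≤ n`,
`f_{m,n} = (-1)^m k^{2n-2m} Σ ∏_{s=1}^m [j_s!(γ)_{j_s}(α)_{ℓ_s}(β)_{ℓ_s} /
(ℓ_s!(γ)_{ℓ_s}(α)_{j_s+1}(β)_{j_s+1})] k^{-2(j_s-ℓ_s)} (w - (1-k²)δℓ_s)`,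
the sum running over `heunIdx m n`; and `f_{m,n} = 0` for `m < 0` or `m > n`. -/
noncomputable def heunf (k : ℝ) (α β γ δ w : ℂ) (m : ℤ) (n : ℕ) : ℂ :=
  if m = 0 then (k : ℂ) ^ (2 * n)
  else if m < 0 ∨ (n : ℤ) < m then 0
  else (-1 : ℂ) ^ m.toNat * (k : ℂ) ^ (2 * (n : ℤ) - 2 * m) *
    ∑ p ∈ heunIdx m.toNat n, ∏ s : Fin m.toNat,
      ((Nat.factorial (p.2 s : ℕ) : ℂ) * poch γ (p.2 s : ℕ) * poch α (p.1 s : ℕ) *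
          poch β (p.1 s : ℕ)) /
        ((Nat.factorial (p.1 s : ℕ) : ℂ) * poch γ (p.1 s : ℕ) * poch α ((p.2 s : ℕ) + 1) *
          poch β ((p.2 s : ℕ) + 1)) *
      (k : ℂ) ^ (-(2 : ℤ) * (((p.2 s : ℕ) : ℤ) - ((p.1 s : ℕ) : ℤ))) *
      (w - (1 - (k : ℂ) ^ 2) * δ * ((p.1 s : ℕ) : ℂ))

/-- The Taylor coefficients `c_n = ((α)_n (β)_n / (n! (γ)_n)) Σ_{m=0}^n f_{m,n}`
of the local Heun solution. -/
noncomputable def heunc (k : ℝ) (α β γ δ w : ℂ) (n : ℕ) : ℂ :=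
  poch α n * poch β n / ((Nat.factorial n : ℂ) * poch γ n) *
    ∑ m ∈ Finset.range (n + 1), heunf k α β γ δ w (m : ℤ) n

/-- Nested sum over `heunIdx` with an arbitrary kernel. -/
noncomputable def heunS (T : ℕ → ℕ → ℂ) (m n : ℕ) : ℂ :=
  ∑ p ∈ heunIdx m n, ∏ s : Fin m, T (p.1 s : ℕ) (p.2 s : ℕ)

lemma heunS_zero (T : ℕ → ℕ → ℂ) (n : ℕ) : heunS T 0 n = 1 := by
  simp [heunS, heunIdx]

lemma heunIdx_mem_facts {m n : ℕ} {q : (Fin (m+1) → Fin n) × (Fin (m+1) → Fin n)}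
    (hq : q ∈ heunIdx (m+1) n) (s : Fin m) :
    (q.1 s.castSucc : ℕ) < (q.1 (Fin.last m) : ℕ) ∧
    (q.2 s.castSucc : ℕ) < (q.1 (Fin.last m) : ℕ) := by
  simp only [heunIdx, Finset.mem_filter, Finset.mem_univ, true_and] at hq
  obtain ⟨h1, h2⟩ := hq
  have hm : StrictMono q.1 := by
    rw [Fin.strictMono_iff_lt_succ]
    intro i
    have a := h1 i.castSucc
    have b := h2 i.castSucc i.succ (by simp)
    exact Fin.lt_def.2 (lt_of_le_of_lt a b)
  have a := h1 s.castSucc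
  have b := h2 s.castSucc s.succ (by simp)
  have c : (q.1 s.succ : ℕ) ≤ (q.1 (Fin.last m) : ℕ) := hm.monotone (Fin.le_last _)
  omega

lemma heunS_succ (T : ℕ → ℕ → ℂ) (m n : ℕ) :
    heunS T (m+1) n = ∑ j ∈ Finset.range n, ∑ l ∈ Finset.range (j+1), T l j * heunS T m l := by
  simp only [heunS, Finset.mul_sum]
  rw [Finset.sum_sigma', Finset.sum_sigma']
  symm
  refine Finset.sum_bij (fun x hx =>
    have hx' : x.1.1 < n ∧ x.1.2 ≤ x.1.1 := by
      simp only [Finset.mem_sigma, Finset.mem_range] at hx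
      omega
    ((Fin.snoc (α := fun _ => Fin n) (fun s => Fin.castLE (by omega) (x.2.1 s)) ⟨x.1.2, by omega⟩,
      Fin.snoc (α := fun _ => Fin n) (fun s => Fin.castLE (by omega) (x.2.2 s)) ⟨x.1.1, by omega⟩) :
      (Fin (m+1) → Fin n) × (Fin (m+1) → Fin n))) ?_ ?_ ?_ ?_
  · rintro ⟨⟨j, l⟩, p⟩ hx
    simp only [Finset.mem_sigma, Finset.mem_range, heunIdx, Finset.mem_filter, Finset.mem_univ,
      true_and] at hx ⊢
    obtain ⟨⟨hj, hl⟩, h1, h2⟩ := hx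
    constructor
    · intro s
      refine Fin.lastCases ?_ (fun s => ?_) s
      · simp; omega
      · simpa using h1 s
    · intro s t
      refine Fin.lastCases ?_ (fun s => ?_) s
      · intro h
        have := t.2
        simp at h
        omega
      · refine Fin.lastCases ?_ (fun t => ?_) t
        · intro h
          simp
        · intro h
          simpa using h2 s t (by simpa using h)
  · rintro ⟨⟨j, l⟩, p⟩ hx ⟨⟨j', l'⟩, p'⟩ hx' h
    simp only [Prod.mk.injEq] at h
    obtain ⟨h1, h2⟩ := h
    have e1 := congrFun h1 (Fin.last m)
    have e2 := congrFun h2 (Fin.last m)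
    simp at e1 e2
    subst e1 e2
    have e3 : p.1 = p'.1 := by
      funext s
      have := congrFun h1 s.castSucc
      simpa [Fin.ext_iff] using this
    have e4 : p.2 = p'.2 := by
      funext s
      have := congrFun h2 s.castSucc
      simpa [Fin.ext_iff] using this
    have : p = p' := Prod.ext e3 e4
    rw [this]
  · intro q hq
    have hf := heunIdx_mem_facts hq
    have hq' := hq
    simp only [heunIdx, Finset.mem_filter, Finset.mem_univ, true_and] at hq'
    obtain ⟨h1, h2⟩ := hq'
    refine ⟨⟨⟨(q.2 (Fin.last m) : ℕ), (q.1 (Fin.last m) : ℕ)⟩,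
      (fun s => ⟨q.1 s.castSucc, (hf s).1⟩, fun s => ⟨q.2 s.castSucc, (hf s).2⟩)⟩, ?_, ?_⟩
    · simp only [Finset.mem_sigma, Finset.mem_range, heunIdx, Finset.mem_filter, Finset.mem_univ,
        true_and]
      refine ⟨⟨Fin.isLt _, Nat.lt_succ_of_le (h1 _)⟩, fun s => h1 _, fun s t h => h2 _ _ (by simpa using h)⟩
    · refine Prod.ext ?_ ?_
      · funext s
        refine Fin.lastCases ?_ (fun s => ?_) s <;> simp [Fin.ext_iff]
      · funext s
        refine Fin.lastCases ?_ (fun s => ?_) s <;> simp [Fin.ext_iff]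
  · rintro ⟨⟨j, l⟩, p⟩ hx
    simp [Fin.prod_univ_castSucc, mul_comm]

lemma heunS_eq_zero (T : ℕ → ℕ → ℂ) (m : ℕ) : ∀ n, n < m → heunS T m n = 0 := by
  induction m with
  | zero => intro n h; omega
  | succ m ih =>
    intro n h
    rw [heunS_succ]
    refine Finset.sum_eq_zero fun j hj => Finset.sum_eq_zero fun l hl => ?_
    simp only [Finset.mem_range] at hj hl
    rw [ih l (by omega), mul_zero]

/-- The kernel of the nested sum. -/
noncomputable def heunT (k : ℝ) (α β γ δ w : ℂ) (l j : ℕ) : ℂ :=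
  ((Nat.factorial j : ℂ) * poch γ j * poch α l * poch β l) /
        ((Nat.factorial l : ℂ) * poch γ l * poch α (j + 1) * poch β (j + 1)) *
      (k : ℂ) ^ (-(2 : ℤ) * ((j : ℤ) - (l : ℤ))) *
      (w - (1 - (k : ℂ) ^ 2) * δ * (l : ℂ))

lemma heunf_eq (k : ℝ) (α β γ δ w : ℂ) (m n : ℕ) :
    heunf k α β γ δ w (m : ℤ) n =
      (-1 : ℂ) ^ m * (k : ℂ) ^ (2 * (n : ℤ) - 2 * m) * heunS (heunT k α β γ δ w) m n := by
  unfold heunf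
  split_ifs with h1 h2
  · have : m = 0 := by exact_mod_cast h1
    subst this
    rw [heunS_zero]
    simp
    norm_cast
  · rw [heunS_eq_zero _ _ _ (by omega), mul_zero]
  · rfl

/-- The difference identity `f_{m,n}/k² - f_{m,n-1} =
-((n-1)!(γ)_{n-1}/(k²(α)_n(β)_n)) Σ_{ℓ=m-1}^{n-1}
((α)_ℓ(β)_ℓ/(ℓ!(γ)_ℓ))(w - (1-k²)δℓ) f_{m-1,ℓ}` for `n ≥ 1`, `0 ≤ m ≤ n`
(with `f_{-1,ℓ} = 0`, so that both sides vanish for `m = 0`). -/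
theorem heunf_difference_identity (k : ℝ) (hk0 : 0 < k) (hk1 : k < 1)
    (α β γ δ w : ℂ)
    (hα : ∀ j : ℕ, α ≠ -(j : ℂ)) (hβ : ∀ j : ℕ, β ≠ -(j : ℂ))
    (hγ : ∀ j : ℕ, γ ≠ -(j : ℂ)) :
    ∀ n : ℕ, 1 ≤ n → ∀ m : ℕ, m ≤ n →
      heunf k α β γ δ w (m : ℤ) n / (k : ℂ) ^ 2 - heunf k α β γ δ w (m : ℤ) (n - 1) =
      -(((Nat.factorial (n - 1) : ℂ) * poch γ (n - 1)) /
          ((k : ℂ) ^ 2 * poch α n * poch β n)) *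
        ∑ ℓ ∈ Finset.Icc (m - 1) (n - 1),
          poch α ℓ * poch β ℓ / ((Nat.factorial ℓ : ℂ) * poch γ ℓ) *
            (w - (1 - (k : ℂ) ^ 2) * δ * (ℓ : ℂ)) *
            heunf k α β γ δ w ((m : ℤ) - 1) ℓ := by
  intro n hn m hm
  obtain ⟨n, rfl⟩ : ∃ n', n = n' + 1 := ⟨n - 1, by omega⟩
  have hk : (k : ℂ) ≠ 0 := by exact_mod_cast hk0.ne'
  simp only [Nat.add_sub_cancel]
  rcases Nat.eq_zero_or_pos m with rfl | hm0
  · have e : ∀ l : ℕ, heunf k α β γ δ w (((0 : ℕ) : ℤ) - 1) l = 0 := by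
      intro l
      simp [heunf]
    simp only [e, mul_zero, Finset.sum_const_zero]
    simp only [heunf, Nat.cast_zero, if_true]
    field_simp
    ring
  · obtain ⟨m, rfl⟩ : ∃ m', m = m' + 1 := ⟨m - 1, by omega⟩
    have hc : (((m + 1 : ℕ) : ℤ) - 1) = (m : ℤ) := by push_cast; ring
    rw [hc]
    simp only [Nat.add_sub_cancel]
    have hsub : Finset.Icc m n ⊆ Finset.range (n + 1) := by
      intro x hx
      simp only [Finset.mem_Icc, Finset.mem_range] at hx ⊢
      omega
    rw [Finset.sum_subset hsub]
    · rw [heunf_eq, heunf_eq, heunS_succ, heunS_succ, Finset.sum_range_succ]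
      have e1 : (k : ℂ) ^ (2 * ((n + 1 : ℕ) : ℤ) - 2 * ((m + 1 : ℕ) : ℤ)) =
          (k : ℂ) ^ (2 * (n : ℤ) - 2 * ((m + 1 : ℕ) : ℤ)) * (k : ℂ) ^ 2 := by
        rw [← zpow_natCast, ← zpow_add₀ hk]
        congr 1
        push_cast
        ring
      rw [e1]
      have key : ∀ A B C D : ℂ, D * (A * (k : ℂ) ^ 2) * (B + C) / (k : ℂ) ^ 2 - D * A * B
          = D * A * C := by
        intro A B C D
        field_simp
        ring
      rw [key, Finset.mul_sum, Finset.mul_sum]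
      refine Finset.sum_congr rfl fun l hl => ?_
      rw [heunf_eq, heunT]
      have e2 : (k : ℂ) ^ (2 * (n : ℤ) - 2 * ((m + 1 : ℕ) : ℤ)) *
          (k : ℂ) ^ (-(2 : ℤ) * ((n : ℤ) - (l : ℤ))) =
          (k : ℂ) ^ (2 * (l : ℤ) - 2 * (m : ℤ)) * ((k : ℂ) ^ 2)⁻¹ := by
        rw [← zpow_natCast, ← zpow_neg, ← zpow_add₀ hk, ← zpow_add₀ hk]
        congr 1
        push_cast
        ring
      generalize (k : ℂ) ^ (2 * (n : ℤ) - 2 * ((m + 1 : ℕ) : ℤ)) = X at e2 ⊢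
      generalize (k : ℂ) ^ (-(2 : ℤ) * ((n : ℤ) - (l : ℤ))) = Y at e2 ⊢
      generalize (k : ℂ) ^ (2 * (l : ℤ) - 2 * (m : ℤ)) = Z at e2 ⊢
      generalize heunS _ m l = S
      generalize w - (1 - (k : ℂ) ^ 2) * δ * (l : ℂ) = W
      simp only [div_eq_mul_inv, mul_inv, pow_succ (-1 : ℂ) m]
      generalize ((k : ℂ) ^ 2)⁻¹ = K at e2 ⊢
      linear_combination ((-1 : ℂ) ^ m * (-1) * ((Nat.factorial n : ℂ) * poch γ n * poch α l *
        poch β l * ((Nat.factorial l : ℂ)⁻¹ * (poch γ l)⁻¹ * (poch α (n + 1))⁻¹ *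
        (poch β (n + 1))⁻¹)) * W * S) * e2
    · intro l hl hl'
      simp only [Finset.mem_Icc, Finset.mem_range] at hl hl'
      rw [heunf_eq, heunS_eq_zero _ _ _ (by omega)]
      simp
end

section
/- Let α, β, γ ∈ ℂ with none of α, β, γ a nonpositive integer, and let k ∈ (0,1). Define f̃_{m,n} as in the context, with the conventions f̃_{−1,ℓ} := 0 and f̃_{m,n} := 0 for m > n. Then for every n ≥ 1 and every m with 1 ≤ m ≤ n: f̃_{m,n} − f̃_{m,n−1} = −( (n−1)!·(α)_{n−1} / ((β)_n·(γ)_n) ) · Σ_{ℓ=m−1}^{n−1} ( (β)_ℓ·(γ)_ℓ / (ℓ!·(α)_ℓ) ) · k^{2(n−1−ℓ)} · f̃_{m−1,ℓ}. -/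
/-- The coefficients `f̃_{m,n}` for the case `δ = β + 1`: `f̃_{0,n} = 1`; for
`1 ≤ m ≤ n`, `f̃_{m,n} = (-1)^m Σ ∏_{s=1}^m [j_s!(α)_{j_s}(β)_{ℓ_s}(γ)_{ℓ_s} /
(ℓ_s!(α)_{ℓ_s}(β)_{j_s+1}(γ)_{j_s+1})] k^{2(j_s-ℓ_s)}`, the sum running over
`heunIdx m n`; and `f̃_{m,n} = 0` for `m < 0` or `m > n`. -/
noncomputable def heunft (k : ℝ) (α β γ : ℂ) (m : ℤ) (n : ℕ) : ℂ :=
  if m = 0 then 1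
  else if m < 0 ∨ (n : ℤ) < m then 0
  else (-1 : ℂ) ^ m.toNat *
    ∑ p ∈ heunIdx m.toNat n, ∏ s : Fin m.toNat,
      ((Nat.factorial (p.2 s : ℕ) : ℂ) * poch α (p.2 s : ℕ) * poch β (p.1 s : ℕ) *
          poch γ (p.1 s : ℕ)) /
        ((Nat.factorial (p.1 s : ℕ) : ℂ) * poch α (p.1 s : ℕ) * poch β ((p.2 s : ℕ) + 1) *
          poch γ ((p.2 s : ℕ) + 1)) *
      (k : ℂ) ^ ((2 : ℤ) * (((p.2 s : ℕ) : ℤ) - ((p.1 s : ℕ) : ℤ)))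

/-- The Taylor coefficients `c̃_n = ((β)_n / n!) Σ_{m=0}^n f̃_{m,n} wᵐ` of the local
Heun solution for `δ = β + 1`. -/
noncomputable def heunct (k : ℝ) (α β γ w : ℂ) (n : ℕ) : ℂ :=
  poch β n / (Nat.factorial n : ℂ) *
    ∑ m ∈ Finset.range (n + 1), heunft k α β γ (m : ℤ) n * w ^ m

/-- Natural-number valued version of the index set. -/
def hN (m n : ℕ) : Finset ((Fin m → ℕ) × (Fin m → ℕ)) :=
  (Fintype.piFinset (fun _ => Finset.range n) ×ˢ Fintype.piFinset (fun _ => Finset.range n)).filter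
    fun p => (∀ s : Fin m, p.1 s ≤ p.2 s) ∧
      (∀ s t : Fin m, (s : ℕ) + 1 = (t : ℕ) → p.2 s < p.1 t)

theorem mem_hN (m n : ℕ) (p : (Fin m → ℕ) × (Fin m → ℕ)) :
    p ∈ hN m n ↔ (∀ s, p.2 s < n) ∧ (∀ s : Fin m, p.1 s ≤ p.2 s) ∧
      (∀ s t : Fin m, (s : ℕ) + 1 = (t : ℕ) → p.2 s < p.1 t) := by
  simp only [hN, Finset.mem_filter, Finset.mem_product, Fintype.mem_piFinset, Finset.mem_range]
  constructor
  · rintro ⟨⟨_, h2⟩, h3, h4⟩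
    exact ⟨h2, h3, h4⟩
  · rintro ⟨h2, h3, h4⟩
    exact ⟨⟨fun s => (h3 s).trans_lt (h2 s), h2⟩, h3, h4⟩

/-- The sum with a general weight. -/
noncomputable def hS (w : ℕ → ℕ → ℂ) (m n : ℕ) : ℂ :=
  ∑ p ∈ hN m n, ∏ s, w (p.1 s) (p.2 s)

theorem sum_heunIdx (w : ℕ → ℕ → ℂ) (m n : ℕ) :
    ∑ p ∈ heunIdx m n, ∏ s, w (p.1 s : ℕ) (p.2 s : ℕ) = hS w m n := by
  unfold hS
  refine Finset.sum_bij (fun p _ => (fun s => (p.1 s : ℕ), fun s => (p.2 s : ℕ))) ?_ ?_ ?_ ?_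
  · intro p hp
    rw [mem_hN]
    simp only [heunIdx, Finset.mem_filter] at hp
    exact ⟨fun s => (p.2 s).2, hp.2⟩
  · intro p _ q _ h
    rw [Prod.mk.injEq] at h
    refine Prod.ext (funext fun s => Fin.ext ?_) (funext fun s => Fin.ext ?_)
    · exact congrFun h.1 s
    · exact congrFun h.2 s
  · intro q hq
    rw [mem_hN] at hq
    obtain ⟨h2, h3, h4⟩ := hq
    refine ⟨(fun s => ⟨q.1 s, (h3 s).trans_lt (h2 s)⟩, fun s => ⟨q.2 s, h2 s⟩), ?_, rfl⟩
    simp only [heunIdx, Finset.mem_filter]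
    exact ⟨Finset.mem_univ _, h3, h4⟩
  · intro p _
    rfl

theorem hS_zero (w : ℕ → ℕ → ℂ) (n : ℕ) : hS w 0 n = 1 := by
  have : hN 0 n = Finset.univ := by
    ext p
    simp [mem_hN]
  simp [hS, this]

theorem hS_succ_zero (w : ℕ → ℕ → ℂ) (m : ℕ) : hS w (m + 1) 0 = 0 := by
  apply Finset.sum_eq_zero
  intro p hp
  rw [mem_hN] at hp
  exact absurd (hp.1 0) (by simp)

theorem hS_rec (w : ℕ → ℕ → ℂ) (m n : ℕ) :
    hS w (m + 1) (n + 1) = hS w (m + 1) n + ∑ l ∈ Finset.range (n + 1), w l n * hS w m l := by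
  have hlast : ∀ N, ∀ p ∈ hN (m + 1) N, ∀ s, p.2 s ≤ p.2 (Fin.last m) := by
    intro N p hp s
    rw [mem_hN] at hp
    have : Monotone p.2 := by
      rw [Fin.monotone_iff_le_succ]
      intro i
      exact ((hp.2.2 i.castSucc i.succ (by simp)).le).trans (hp.2.1 _)
    exact this (Fin.le_last s)
  have e1 : (hN (m + 1) (n + 1)).filter (fun p => p.2 (Fin.last m) < n) = hN (m + 1) n := by
    ext p
    rw [Finset.mem_filter]
    constructor
    · rintro ⟨hp, h⟩
      have := hlast _ p hp
      rw [mem_hN] at hp ⊢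
      exact ⟨fun s => (this s).trans_lt h, hp.2⟩
    · intro hp
      rw [mem_hN] at hp ⊢
      exact ⟨⟨fun s => (hp.1 s).trans (Nat.lt_succ_self n), hp.2⟩, hp.1 _⟩
  unfold hS
  rw [← Finset.sum_filter_add_sum_filter_not (hN (m + 1) (n + 1))
    (fun p => p.2 (Fin.last m) < n), e1]
  congr 1
  simp_rw [Finset.mul_sum]
  rw [Finset.sum_sigma']
  refine Finset.sum_bij'
    (fun p _ => ⟨p.1 (Fin.last m), (fun s => p.1 s.castSucc, fun s => p.2 s.castSucc)⟩)
    (fun q _ => ((Fin.snoc (α := fun _ => ℕ) q.2.1 q.1 : Fin (m + 1) → ℕ),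
      (Fin.snoc (α := fun _ => ℕ) q.2.2 n : Fin (m + 1) → ℕ))) ?_ ?_ ?_ ?_ ?_
  · intro p hp
    rw [Finset.mem_filter] at hp
    obtain ⟨hp, hn⟩ := hp
    rw [mem_hN] at hp
    obtain ⟨h2, h3, h4⟩ := hp
    rw [Finset.mem_sigma, Finset.mem_range, mem_hN]
    refine ⟨(h3 _).trans_lt (h2 _), ?_, fun s => h3 _, fun s t h => h4 _ _ (by simpa using h)⟩
    intro s
    have hmono : Monotone p.2 := by
      rw [Fin.monotone_iff_le_succ]
      intro i
      exact ((h4 i.castSucc i.succ (by simp)).le).trans (h3 _)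
    have hmono1 : Monotone p.1 := by
      rw [Fin.monotone_iff_le_succ]
      intro i
      exact (h3 _).trans ((h4 i.castSucc i.succ (by simp)).le)
    exact (h4 s.castSucc s.succ (by simp)).trans_le (hmono1 (Fin.le_last _))
  · rintro ⟨l, q⟩ hq
    rw [Finset.mem_sigma, Finset.mem_range, mem_hN] at hq
    obtain ⟨hl, h2, h3, h4⟩ := hq
    dsimp only at hl h2 h3 h4
    rw [Finset.mem_filter, mem_hN]
    refine ⟨⟨?_, ?_, ?_⟩, by simp⟩
    · intro s
      refine Fin.lastCases ?_ (fun i => ?_) s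
      · simp
      · have := h2 i
        simp
        omega
    · intro s
      refine Fin.lastCases ?_ (fun i => ?_) s
      · simp
        omega
      · simpa using h3 i
    · intro s t
      refine Fin.lastCases ?_ (fun i => ?_) s
      · intro h
        have := t.2
        simp at h
        omega
      · refine Fin.lastCases ?_ (fun j => ?_) t
        · intro _
          simpa using h2 i
        · intro h
          simpa using h4 i j (by simpa using h)
  · intro p hp
    rw [Finset.mem_filter, mem_hN] at hp
    have hn : p.2 (Fin.last m) = n := by
      have := hp.1.1 (Fin.last m)
      have := hp.2
      omega
    refine Prod.ext (funext fun s => ?_) (funext fun s => ?_)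
    · refine Fin.lastCases ?_ (fun i => ?_) s <;> simp
    · refine Fin.lastCases ?_ (fun i => ?_) s <;> simp [hn]
  · rintro ⟨l, q⟩ _
    simp
  · intro p hp
    rw [Finset.mem_filter, mem_hN] at hp
    have hn : p.2 (Fin.last m) = n := by
      have := hp.1.1 (Fin.last m)
      have := hp.2
      omega
    rw [Fin.prod_univ_castSucc, hn, mul_comm]

theorem hS_eq_zero (w : ℕ → ℕ → ℂ) (n : ℕ) : ∀ m, n < m → hS w m n = 0 := by
  induction n using Nat.strong_induction_on with
  | _ n ih =>
    intro m hm
    obtain ⟨m, rfl⟩ : ∃ m', m = m' + 1 := ⟨m - 1, by omega⟩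
    cases n with
    | zero => exact hS_succ_zero w m
    | succ n =>
      rw [hS_rec, ih n (by omega) _ (by omega), Finset.sum_eq_zero, add_zero]
      intro l hl
      rw [Finset.mem_range] at hl
      rw [ih l (by omega) _ (by omega), mul_zero]

/-- The weight of the paper. -/
noncomputable def hw (k : ℝ) (α β γ : ℂ) (l j : ℕ) : ℂ :=
  ((Nat.factorial j : ℂ) * poch α j * poch β l * poch γ l) /
    ((Nat.factorial l : ℂ) * poch α l * poch β (j + 1) * poch γ (j + 1)) *
  (k : ℂ) ^ ((2 : ℤ) * ((j : ℤ) - (l : ℤ)))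

theorem heunft_eq (k : ℝ) (α β γ : ℂ) (m n : ℕ) :
    heunft k α β γ (m : ℤ) n = (-1) ^ m * hS (hw k α β γ) m n := by
  unfold heunft
  split_ifs with h1 h2
  · have : m = 0 := by omega
    subst this
    simp [hS_zero]
  · rw [hS_eq_zero _ _ _ (by omega), mul_zero]
  · rw [← sum_heunIdx]
    rfl

/-- The difference identity `f̃_{m,n} - f̃_{m,n-1} =
-((n-1)!(α)_{n-1}/((β)_n(γ)_n)) Σ_{ℓ=m-1}^{n-1}
((β)_ℓ(γ)_ℓ/(ℓ!(α)_ℓ)) k^{2(n-1-ℓ)} f̃_{m-1,ℓ}` for `n ≥ 1` and `1 ≤ m ≤ n`. -/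
theorem heunft_difference_identity (k : ℝ) (hk0 : 0 < k) (hk1 : k < 1)
    (α β γ : ℂ)
    (hα : ∀ j : ℕ, α ≠ -(j : ℂ)) (hβ : ∀ j : ℕ, β ≠ -(j : ℂ))
    (hγ : ∀ j : ℕ, γ ≠ -(j : ℂ)) :
    ∀ n : ℕ, 1 ≤ n → ∀ m : ℕ, 1 ≤ m → m ≤ n →
      heunft k α β γ (m : ℤ) n - heunft k α β γ (m : ℤ) (n - 1) =
      -(((Nat.factorial (n - 1) : ℂ) * poch α (n - 1)) / (poch β n * poch γ n)) *
        ∑ ℓ ∈ Finset.Icc (m - 1) (n - 1),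
          poch β ℓ * poch γ ℓ / ((Nat.factorial ℓ : ℂ) * poch α ℓ) *
            (k : ℂ) ^ (2 * (n - 1 - ℓ)) *
            heunft k α β γ ((m : ℤ) - 1) ℓ := by
  intro n hn m hm hmn
  obtain ⟨n, rfl⟩ : ∃ n', n = n' + 1 := ⟨n - 1, by omega⟩
  obtain ⟨m, rfl⟩ : ∃ m', m = m' + 1 := ⟨m - 1, by omega⟩
  have hm1 : ((m + 1 : ℕ) : ℤ) - 1 = (m : ℤ) := by push_cast; ring
  simp only [hm1, heunft_eq, Nat.add_sub_cancel]
  rw [hS_rec]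
  have hsub : ∑ l ∈ Finset.Icc m n, hw k α β γ l n * hS (hw k α β γ) m l =
      ∑ l ∈ Finset.range (n + 1), hw k α β γ l n * hS (hw k α β γ) m l := by
    apply Finset.sum_subset
    · intro l hl
      rw [Finset.mem_Icc] at hl
      rw [Finset.mem_range]
      omega
    · intro l hl hl2
      rw [Finset.mem_range] at hl
      rw [Finset.mem_Icc] at hl2
      rw [hS_eq_zero _ _ _ (by omega), mul_zero]
  rw [← hsub, mul_add, add_sub_cancel_left, Finset.mul_sum, Finset.mul_sum]
  apply Finset.sum_congr rfl
  intro l hl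
  rw [Finset.mem_Icc] at hl
  have hz : (k : ℂ) ^ ((2 : ℤ) * ((n : ℤ) - (l : ℤ))) = (k : ℂ) ^ (2 * (n - l)) := by
    rw [← zpow_natCast]
    congr 1
    push_cast [Nat.cast_sub hl.2]
    ring
  unfold hw
  rw [hz, pow_succ]
  simp only [div_eq_mul_inv, mul_inv]
  ring
end
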